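/- arXiv:2109.12647 — 3 statements merged into one kernel-verified Lean document; each statement's English description precedes it below -/
import Mathlib

section
/- Let d ≥ 1 and let S be a compact connected subset of ℝ^d. Then every point of the convex hull of S can be written as a convex combination of at most d points of S; i.e., for every x in conv(S) there exist points s_1,…,s_d ∈ S and nonnegative reals λ_1,…,λ_d with λ_1+⋯+λ_d = 1 and x = λ_1 s_1 + ⋯ + λ_d s_d. -/
/-!
By Carathéodory's theorem, only a point `x` in the interior of a full-dimensional simplex with
vertices in `S` needs attention. Compare the barycentric coordinates of other points with those of
`x`: the points whose coordinate ratio is largest at the vertex `i` form a closed set containing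
that vertex, and these sets cover the space.
As `S` has too few connected components to separate all the vertices, one component contains two of
them, hence also a point `y` whose ratio is largest at two vertices `i ≠ j` simultaneously.
Travelling from `y` through `x`, one leaves the simplex through the face spanned by the vertices
other than `i` and `j`, so `x` is a convex combination of `y` and those vertices.
-/

open Set Module

section Convex

variable {𝕜 E ι : Type*} [Field 𝕜] [LinearOrder 𝕜] [IsStrictOrderedRing 𝕜] [AddCommGroup E]
  [Module 𝕜 E]

theorem convexHull_range_eq_image_stdSimplex [Fintype ι] (v : ι → E) :
    convexHull 𝕜 (range v) = Fintype.linearCombination 𝕜 v '' stdSimplex 𝕜 ι := by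
  classical
  rw [← convexHull_rangle_single_eq_stdSimplex, LinearMap.image_convexHull, ← range_comp]
  congr 2
  ext i
  simp

theorem exists_fin_range_eq_of_card_le {α : Type*} {t : Finset α} {n : ℕ} (ht : t.Nonempty)
    (hcard : t.card ≤ n) : ∃ s : Fin n → α, range s = t := by
  have : Nonempty t := ht.to_subtype
  obtain ⟨e⟩ := Function.Embedding.nonempty_of_card_le (α := t) (β := Fin n) (by simpa using hcard)
  obtain ⟨f, hf⟩ := Function.exists_surjective_iff.2 ⟨inferInstance, ⟨e⟩⟩
  exact ⟨(↑) ∘ f, by rw [hf.range_comp, Subtype.range_coe]⟩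

theorem exists_fin_convexCombination_of_mem_convexHull {t : Finset E} {n : ℕ}
    (hcard : t.card ≤ n) {x : E} (hx : x ∈ convexHull 𝕜 (t : Set E)) :
    ∃ (s : Fin n → E) (l : Fin n → 𝕜),
      (∀ i, s i ∈ t) ∧ (∀ i, 0 ≤ l i) ∧ ∑ i, l i = 1 ∧ x = ∑ i, l i • s i := by
  have ht : t.Nonempty := Finset.coe_nonempty.1 (convexHull_nonempty_iff.1 ⟨x, hx⟩)
  obtain ⟨s, hs⟩ := exists_fin_range_eq_of_card_le ht hcard
  rw [← hs, convexHull_range_eq_image_stdSimplex] at hx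
  obtain ⟨l, ⟨hl_nonneg, hl_sum⟩, rfl⟩ := hx
  exact ⟨s, l, fun i => Finset.mem_coe.1 (hs ▸ mem_range_self i), hl_nonneg, hl_sum,
    Fintype.linearCombination_apply ..⟩

theorem mem_convexHull_insert_of_mul_coord_le [Finite ι] (b : AffineBasis ι 𝕜 E) {x y : E} {a : 𝕜}
    (ha : 0 ≤ a) {s : Set ι} (hle : ∀ k, a * b.coord k y ≤ b.coord k x)
    (heq : ∀ k ∉ s, a * b.coord k y = b.coord k x) :
    x ∈ convexHull 𝕜 (insert y (b '' s)) := by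
  classical
  have := Fintype.ofFinite ι
  let w : Option ι → 𝕜 := fun o => o.elim a fun k => b.coord k x - a * b.coord k y
  let z : Option ι → E := fun o => o.elim y b
  have hw_nonneg : ∀ o, 0 ≤ w o := Option.forall.2 ⟨ha, fun k => sub_nonneg.2 (hle k)⟩
  have hw_sum : ∑ o, w o = 1 := by
    simp [w, Fintype.sum_option, Finset.sum_sub_distrib, ← Finset.mul_sum]
  have hx : ∑ o, w o • z o = x := by
    simp [w, z, Fintype.sum_option, sub_smul, mul_smul, Finset.sum_sub_distrib, ← Finset.smul_sum]
  have hz : ∀ o, w o ≠ 0 → z o ∈ convexHull 𝕜 (insert y (b '' s)) := by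
    refine fun o ho => subset_convexHull 𝕜 _ ?_
    cases o with
    | none => exact mem_insert y _
    | some k =>
      have hk : k ∈ s := by_contra fun hk => ho (sub_eq_zero.2 (heq k hk).symm)
      exact mem_insert_of_mem y (mem_image_of_mem b hk)
  rw [← hx, ← finsum_eq_sum_of_fintype]
  exact (convex_convexHull 𝕜 _).finsum_mem hw_nonneg (by rwa [finsum_eq_sum_of_fintype]) hz

end Convex

section MaxRatioCell

variable {𝕜 E ι : Type*} [Field 𝕜] [LinearOrder 𝕜] [AddCommGroup E] [Module 𝕜 E]

/-- The points whose barycentric coordinates, measured relative to those of `x`, are largest at `i`.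
When `x` lies in the interior of the simplex spanned by `b`, these are the points `y` such that `x`
is a convex combination of `y` and the vertices other than `b i`. -/
def maxRatioCell (b : AffineBasis ι 𝕜 E) (x : E) (i : ι) : Set E :=
  {y | ∀ k, b.coord k y / b.coord k x ≤ b.coord i y / b.coord i x}

theorem iUnion_maxRatioCell [Finite ι] (b : AffineBasis ι 𝕜 E) (x : E) :
    ⋃ i, maxRatioCell b x i = univ := by
  have := b.nonempty
  exact iUnion_eq_univ_iff.2 fun y => Finite.exists_max fun k => b.coord k y / b.coord k x

variable [IsStrictOrderedRing 𝕜]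

theorem basis_mem_maxRatioCell (b : AffineBasis ι 𝕜 E) {x : E} {i : ι} (hx : 0 ≤ b.coord i x) :
    b i ∈ maxRatioCell b x i := by
  intro k
  obtain rfl | hk := eq_or_ne k i
  · rfl
  · simp [b.coord_apply_ne hk, hx]

theorem coord_pos_of_mem_maxRatioCell [Finite ι] (b : AffineBasis ι 𝕜 E) {x y : E} {i : ι}
    (hx : ∀ k, 0 < b.coord k x) (hy : y ∈ maxRatioCell b x i) : 0 < b.coord i y := by
  have := Fintype.ofFinite ι
  obtain ⟨k, -, hk⟩ : ∃ k ∈ Finset.univ, 0 < b.coord k y :=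
    Finset.exists_lt_of_sum_lt (by simp)
  exact (div_pos_iff_of_pos_right (hx i)).1 ((div_pos hk (hx k)).trans_le (hy k))

theorem mem_convexHull_insert_image_compl [Finite ι] (b : AffineBasis ι 𝕜 E) {x y : E}
    (hx : ∀ k, 0 < b.coord k x) {s : Set ι} (hs : s.Nonempty)
    (hy : ∀ i ∈ s, y ∈ maxRatioCell b x i) :
    x ∈ convexHull 𝕜 (insert y (b '' sᶜ)) := by
  obtain ⟨i, hi⟩ := hs
  have hyi := coord_pos_of_mem_maxRatioCell b hx (hy i hi)
  have hle : ∀ k, b.coord i x / b.coord i y * b.coord k y ≤ b.coord k x := fun k => by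
    have h := hy i hi k
    rw [div_le_div_iff₀ (hx k) (hx i)] at h
    rw [div_mul_eq_mul_div, div_le_iff₀ hyi]
    linarith
  refine mem_convexHull_insert_of_mul_coord_le b (div_pos (hx i) hyi).le hle fun k hk => ?_
  have h : b.coord k y / b.coord k x = b.coord i y / b.coord i x :=
    le_antisymm (hy i hi k) (hy k (notMem_compl_iff.1 hk) i)
  have := (hx k).ne'
  have := (hx i).ne'
  field_simp at h ⊢
  linarith

end MaxRatioCell

section Connected

variable {X ι : Type*} [TopologicalSpace X]

theorem exists_mem_inter_of_isPreconnected_of_isClosed_cover [Finite ι] {C : Set X}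
    (hC : IsPreconnected C) {F : ι → Set X} (hF : ∀ k, IsClosed (F k)) (hcover : C ⊆ ⋃ k, F k)
    {i j : ι} (hij : i ≠ j) (hi : (C ∩ F i).Nonempty) (hj : (C ∩ F j).Nonempty) :
    ∃ k ≠ i, (C ∩ (F i ∩ F k)).Nonempty := by
  let G : Set X := ⋃ k : {k // k ≠ i}, F k
  have hG : IsClosed G := isClosed_iUnion_of_finite fun k => hF k
  have hsubset : C ⊆ F i ∪ G := fun y hy => by
    obtain ⟨k, hk⟩ := mem_iUnion.1 (hcover hy)
    obtain rfl | hki := eq_or_ne k i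
    · exact Or.inl hk
    · exact Or.inr (mem_iUnion.2 ⟨⟨k, hki⟩, hk⟩)
  have hCG : (C ∩ G).Nonempty :=
    hj.mono (inter_subset_inter_right C (subset_iUnion_of_subset ⟨j, hij.symm⟩ subset_rfl))
  obtain ⟨y, hyC, hyi, hyG⟩ := isPreconnected_closed_iff.1 hC (F i) G (hF i) hG hsubset hi hCG
  obtain ⟨⟨k, hki⟩, hyk⟩ := mem_iUnion.1 hyG
  exact ⟨k, hki, y, hyC, hyi, hyk⟩

theorem exists_ne_mem_connectedComponentIn_of_card_lt {S : Set X} {z : ι → X} (hz : ∀ i, z i ∈ S)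
    (hcard : ENat.card (ConnectedComponents S) < ENat.card ι) :
    ∃ i j, i ≠ j ∧ z j ∈ connectedComponentIn S (z i) := by
  let component : ι → ConnectedComponents S := fun i => ConnectedComponents.mk ⟨z i, hz i⟩
  have hnot_inj : ¬ Function.Injective component := fun h =>
    hcard.not_ge (ENat.card_le_card_of_injective h)
  obtain ⟨j, i, hji, hne⟩ := Function.not_injective_iff.1 hnot_inj
  refine ⟨i, j, hne.symm, ?_⟩
  rw [connectedComponentIn_eq_image (hz i)]
  exact mem_image_of_mem Subtype.val (ConnectedComponents.coe_eq_coe'.1 hji)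

end Connected

section FiniteDimensional

variable {E ι : Type*} [AddCommGroup E] [Module ℝ E] [TopologicalSpace E]
  [IsTopologicalAddGroup E] [ContinuousSMul ℝ E] [T2Space E] [FiniteDimensional ℝ E]

theorem isClosed_maxRatioCell (b : AffineBasis ι ℝ E) (x : E) (i : ι) :
    IsClosed (maxRatioCell b x i) := by
  have hcont : ∀ k, Continuous (b.coord k) := fun k =>
    AffineMap.continuous_linear_iff.1 (b.coord k).linear.continuous_of_finiteDimensional
  simp only [maxRatioCell, ofPred_forall]
  exact isClosed_iInter fun k =>
    isClosed_le ((hcont k).div_const _) ((hcont i).div_const _)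

theorem exists_mem_convexHull_insert_image_compl_pair [Finite ι] (b : AffineBasis ι ℝ E) {x : E}
    (hx : ∀ k, 0 < b.coord k x) {C : Set E} (hC : IsPreconnected C) {i j : ι} (hij : i ≠ j)
    (hi : b i ∈ C) (hj : b j ∈ C) :
    ∃ y ∈ C, ∃ k ≠ i, x ∈ convexHull ℝ (insert y (b '' {i, k}ᶜ)) := by
  obtain ⟨k, hki, y, hyC, hyi, hyk⟩ := exists_mem_inter_of_isPreconnected_of_isClosed_cover hC
    (isClosed_maxRatioCell b x) (by simp [iUnion_maxRatioCell]) hij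
    ⟨b i, hi, basis_mem_maxRatioCell b (hx i).le⟩ ⟨b j, hj, basis_mem_maxRatioCell b (hx j).le⟩
  refine ⟨y, hyC, k, hki, mem_convexHull_insert_image_compl b hx (insert_nonempty i {k}) ?_⟩
  rintro l (rfl | rfl)
  exacts [hyi, hyk]

theorem exists_finset_card_lt_mem_convexHull [Fintype ι] (b : AffineBasis ι ℝ E) {S : Set E}
    (hb : ∀ i, b i ∈ S) (hcomp : ENat.card (ConnectedComponents S) < ENat.card ι) {x : E}
    (hx : ∀ i, 0 < b.coord i x) :
    ∃ t : Finset E, ↑t ⊆ S ∧ t.card < Fintype.card ι ∧ x ∈ convexHull ℝ (t : Set E) := by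
  classical
  obtain ⟨i, j, hij, hj⟩ := exists_ne_mem_connectedComponentIn_of_card_lt hb hcomp
  obtain ⟨y, hy, k, hki, hxy⟩ := exists_mem_convexHull_insert_image_compl_pair b hx
    isPreconnected_connectedComponentIn hij (mem_connectedComponentIn (hb i)) hj
  refine ⟨insert y (({i, k}ᶜ : Finset ι).image b), ?_, ?_, ?_⟩
  · have hyS : y ∈ S := connectedComponentIn_subset S (b i) hy
    rw [Finset.coe_insert, Finset.coe_image]
    exact insert_subset hyS (image_subset_iff.2 fun l _ => hb l)
  · have h_insert := Finset.card_insert_le y (({i, k}ᶜ : Finset ι).image b)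
    have h_image := Finset.card_image_le (s := ({i, k}ᶜ : Finset ι)) (f := b)
    have h_compl := Finset.card_add_card_compl ({i, k} : Finset ι)
    rw [Finset.card_pair hki.symm] at h_compl
    omega
  · simpa only [Finset.coe_insert, Finset.coe_image, Finset.coe_compl, Finset.coe_singleton]
      using hxy

theorem exists_finset_card_le_mem_convexHull {n : ℕ} (hn : finrank ℝ E ≤ n) {S : Set E}
    (hS : ENat.card (ConnectedComponents S) ≤ n) {x : E} (hx : x ∈ convexHull ℝ S) :
    ∃ t : Finset E, ↑t ⊆ S ∧ t.card ≤ n ∧ x ∈ convexHull ℝ (t : Set E) := by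
  classical
  obtain ⟨ι, _, z, w, hzS, hz, hw, hw_sum, rfl⟩ := eq_pos_convex_span_of_mem_convexHull hx
  have hzS' : ∀ i, z i ∈ S := fun i => hzS (mem_range_self i)
  by_cases hcard : Fintype.card ι ≤ n
  · refine ⟨Finset.univ.image z, by simpa using hzS, Finset.card_image_le.trans hcard, ?_⟩
    exact mem_convexHull_of_exists_fintype w z (fun i => (hw i).le) hw_sum (by simp) rfl
  have hι : Fintype.card ι = n + 1 ∧ Fintype.card ι = finrank ℝ E + 1 := by
    have h := hz.card_le_finrank_succ.trans (Nat.succ_le_succ (Submodule.finrank_le _))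
    omega
  let b : AffineBasis ι ℝ E :=
    ⟨z, hz, hz.affineSpan_eq_top_iff_card_eq_finrank_add_one.2 hι.2⟩
  have hcoord : ∀ i, b.coord i (∑ k, w k • z k) = w i := fun i => by
    rw [← Finset.affineCombination_eq_linear_combination _ _ _ hw_sum]
    exact b.coord_apply_combination_of_mem (Finset.mem_univ i) hw_sum
  have hcomp : ENat.card (ConnectedComponents S) < ENat.card ι := by
    rw [ENat.card_eq_coe_fintype_card (α := ι), hι.1]
    exact hS.trans_lt (by exact_mod_cast n.lt_succ_self)
  obtain ⟨t, htS, ht, hxt⟩ := exists_finset_card_lt_mem_convexHull b hzS' hcomp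
    fun i => (hcoord i).symm ▸ hw i
  exact ⟨t, htS, by omega, hxt⟩

theorem fenchel_eggleston_general {n : ℕ} (hn : finrank ℝ E ≤ n) {S : Set E}
    (hS : ENat.card (ConnectedComponents S) ≤ n) {x : E} (hx : x ∈ convexHull ℝ S) :
    ∃ (s : Fin n → E) (l : Fin n → ℝ),
      (∀ i, s i ∈ S) ∧ (∀ i, 0 ≤ l i) ∧ ∑ i, l i = 1 ∧ x = ∑ i, l i • s i := by
  obtain ⟨t, htS, ht, hxt⟩ := exists_finset_card_le_mem_convexHull hn hS hx
  obtain ⟨s, l, hs, h⟩ := exists_fin_convexCombination_of_mem_convexHull ht hxt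
  exact ⟨s, l, fun i => htS (hs i), h⟩

end FiniteDimensional

/-- **Fenchel–Eggleston strengthening of Carathéodory's theorem.**
If `S` is a compact connected subset of `ℝ^d` (with `d ≥ 1`), then every point of the
convex hull of `S` is a convex combination of at most `d` points of `S`. -/
theorem fenchel_eggleston (d : ℕ) (hd : 1 ≤ d) (S : Set (Fin d → ℝ))
    (hScompact : IsCompact S) (hSconn : IsConnected S)
    (x : Fin d → ℝ) (hx : x ∈ convexHull ℝ S) :
    ∃ (s : Fin d → (Fin d → ℝ)) (l : Fin d → ℝ),
      (∀ i, s i ∈ S) ∧ (∀ i, 0 ≤ l i) ∧ (∑ i, l i = 1) ∧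
      x = ∑ i, l i • s i := by
  have : PreconnectedSpace S := Subtype.preconnectedSpace hSconn.isPreconnected
  exact fenchel_eggleston_general (finrank_fin_fun ℝ).le
    ((ENat.card_le_one_iff_subsingleton _).2 inferInstance |>.trans (mod_cast hd)) hx
end

section
/- Let p be a pmf on a finite set 𝒳, let δ > 0, and set c = Σ_{a ∈ 𝒳, p(a)>0} |log₂ p(a)|. Then for every n ≥ 1 the cardinality of the δ-typical set satisfies |T_δ^{(n)}(p)| ≤ 2^{n(H(p)+cδ)}. -/
open Finset

/-- `count x a` is the number of occurrences `N(a|x^n)` of the symbol `a`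
in the sequence `x = (x_1, …, x_n)`. -/
def count {𝒳 : Type} [DecidableEq 𝒳] {n : ℕ} (x : Fin n → 𝒳) (a : 𝒳) : ℕ :=
  (Finset.univ.filter fun i => x i = a).card

/-- `IsTypical p δ x` asserts that the sequence `x` belongs to the δ-typical set
`T_δ^{(n)}(p)`. -/
def IsTypical {𝒳 : Type} [DecidableEq 𝒳] {n : ℕ} (p : 𝒳 → ℝ) (δ : ℝ)
    (x : Fin n → 𝒳) : Prop :=
  ∀ a : 𝒳, (0 < p a → |(count x a : ℝ) / n - p a| ≤ δ) ∧ (p a = 0 → count x a = 0)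

noncomputable instance {𝒳 : Type} [Fintype 𝒳] [DecidableEq 𝒳] {n : ℕ} (p : 𝒳 → ℝ) (δ : ℝ)
    (x : Fin n → 𝒳) : Decidable (IsTypical p δ x) := by
  unfold IsTypical; infer_instance

/-- The Shannon entropy `H(p) = −Σ_{a : p(a)>0} p(a) log₂ p(a)` of a pmf on a finite set. -/
noncomputable def shannonEnt {𝒳 : Type} [Fintype 𝒳] (p : 𝒳 → ℝ) : ℝ :=
  -∑ a, if 0 < p a then p a * Real.logb 2 (p a) else 0

/-!
Weight a sequence by `∏ i, p (x i)`. The weights of all sequences sum to `(∑ a, p a) ^ n`, which is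
`1` for a pmf, while every typical sequence has weight at least `2 ^ (-n (H(p) + c δ))`: its weight
is `∏ a, p a ^ N(a|x)` with `N(a|x)` within `n δ` of `n p(a)`, so the exponent
`∑ a, N(a|x) log₂ p(a)` is within `n δ ∑ a, |log₂ p(a)| = n c δ` of `-n H(p)`.
-/

lemma mul_sub_abs_mul_le_mul_of_abs_div_sub_le {K : Type*} [Field K] [LinearOrder K]
    [IsStrictOrderedRing K] {k n q δ : K} (hn : 0 < n) (h : |k / n - q| ≤ δ) (L : K) :
    n * (q * L - |L| * δ) ≤ k * L := by
  have hdev : |(k / n - q) * L| ≤ |L| * δ := by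
    rw [abs_mul, mul_comm]
    gcongr
  calc n * (q * L - |L| * δ) ≤ n * (q * L + (k / n - q) * L) := by
        gcongr
        linarith [neg_le_of_abs_le hdev]
    _ = k * L := by field_simp; ring

lemma rpow_mul_logb_sub_le_pow_of_abs_div_sub_le {b n q δ : ℝ} {k : ℕ} (hb : 1 < b)
    (hn : 0 < n) (hq : 0 < q) (h : |k / n - q| ≤ δ) :
    b ^ (n * (q * Real.logb b q - |Real.logb b q| * δ)) ≤ q ^ k :=
  calc b ^ (n * (q * Real.logb b q - |Real.logb b q| * δ))
      ≤ b ^ (k * Real.logb b q) :=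
        Real.rpow_le_rpow_of_exponent_le hb.le
          (mul_sub_abs_mul_le_mul_of_abs_div_sub_le hn h _)
    _ = q ^ k := by
        rw [mul_comm, Real.rpow_mul_natCast (by positivity),
          Real.rpow_logb (by positivity) hb.ne' hq]

lemma IsTypical.two_rpow_le_pow_count {𝒳 : Type} [DecidableEq 𝒳] {p : 𝒳 → ℝ} {δ : ℝ} {n : ℕ}
    {x : Fin n → 𝒳} (hx : IsTypical p δ x) (hn : n ≠ 0) {a : 𝒳} (ha : 0 ≤ p a) :
    (2 : ℝ) ^ (if 0 < p a then
      (n : ℝ) * (p a * Real.logb 2 (p a) - |Real.logb 2 (p a)| * δ) else 0) ≤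
        p a ^ count x a := by
  obtain hpos | hzero := ha.lt_or_eq'
  · rw [if_pos hpos]
    exact rpow_mul_logb_sub_le_pow_of_abs_div_sub_le one_lt_two (by positivity) hpos ((hx a).1 hpos)
  · rw [if_neg hzero.not_gt, (hx a).2 hzero, Real.rpow_zero, pow_zero]

section TypicalSequences

variable {𝒳 : Type} [Fintype 𝒳]

/-- The constant `c = ∑_{a : p(a) > 0} |log₂ p(a)|`, by which a deviation `δ` of the letter
frequencies from `p` is multiplied in the exponent. -/
noncomputable def sumAbsLogb (p : 𝒳 → ℝ) : ℝ :=
  ∑ a, if 0 < p a then |Real.logb 2 (p a)| else 0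

lemma neg_mul_shannonEnt_add_eq_sum (p : 𝒳 → ℝ) (δ t : ℝ) :
    -(t * (shannonEnt p + sumAbsLogb p * δ)) =
      ∑ a, if 0 < p a then t * (p a * Real.logb 2 (p a) - |Real.logb 2 (p a)| * δ) else 0 := by
  have hsplit (a : 𝒳) :
      (if 0 < p a then t * (p a * Real.logb 2 (p a) - |Real.logb 2 (p a)| * δ) else 0) =
        t * ((if 0 < p a then p a * Real.logb 2 (p a) else 0) -
          (if 0 < p a then |Real.logb 2 (p a)| else 0) * δ) := by
    split_ifs <;> ring
  simp only [hsplit, ← mul_sum, sum_sub_distrib, ← sum_mul, shannonEnt, sumAbsLogb]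
  ring

variable [DecidableEq 𝒳] {n : ℕ}

lemma prod_comp_eq_prod_pow_count {M : Type*} [CommMonoid M] (f : 𝒳 → M) (x : Fin n → 𝒳) :
    ∏ i, f (x i) = ∏ a, f a ^ count x a := by
  simp only [count, ← prod_const, prod_fiberwise']

variable {p : 𝒳 → ℝ} {δ : ℝ} {x : Fin n → 𝒳}

lemma IsTypical.two_rpow_neg_le_prod (hx : IsTypical p δ x) (hn : n ≠ 0) (hp0 : ∀ a, 0 ≤ p a) :
    (2 : ℝ) ^ (-((n : ℝ) * (shannonEnt p + sumAbsLogb p * δ))) ≤ ∏ i, p (x i) := by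
  rw [neg_mul_shannonEnt_add_eq_sum, Real.rpow_sum_of_pos two_pos, prod_comp_eq_prod_pow_count]
  exact prod_le_prod (fun _ _ ↦ by positivity) fun a _ ↦ hx.two_rpow_le_pow_count hn (hp0 a)

theorem typical_set_cardinality_bound_general (hp0 : ∀ a, 0 ≤ p a) (δ : ℝ) (hn : n ≠ 0) :
    (#{x : Fin n → 𝒳 | IsTypical p δ x} : ℝ) ≤
      (∑ a, p a) ^ n * (2 : ℝ) ^ ((n : ℝ) * (shannonEnt p + sumAbsLogb p * δ)) := by
  rw [← div_le_iff₀ (by positivity), div_eq_mul_inv, ← Real.rpow_neg zero_le_two, ← nsmul_eq_mul]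
  calc #{x : Fin n → 𝒳 | IsTypical p δ x} •
        (2 : ℝ) ^ (-((n : ℝ) * (shannonEnt p + sumAbsLogb p * δ)))
      ≤ ∑ x : Fin n → 𝒳 with IsTypical p δ x, ∏ i, p (x i) :=
        card_nsmul_le_sum _ _ _ fun _ hx ↦ (mem_filter.mp hx).2.two_rpow_neg_le_prod hn hp0
    _ ≤ ∑ x : Fin n → 𝒳, ∏ i, p (x i) :=
        sum_le_univ_sum_of_nonneg fun _ ↦ prod_nonneg fun _ _ ↦ hp0 _
    _ = (∑ a, p a) ^ n := (Fintype.sum_pow p n).symm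

end TypicalSequences

/-- **Cardinality bound on the typical set.** For every pmf `p`, `δ > 0`,
`c = Σ_{a : p(a)>0} |log₂ p(a)|`, and every `n ≥ 1`,
`|T_δ^{(n)}(p)| ≤ 2^{n(H(p)+cδ)}`. -/
theorem typical_set_cardinality_bound {𝒳 : Type} [Fintype 𝒳] [DecidableEq 𝒳]
    (p : 𝒳 → ℝ) (hp0 : ∀ a, 0 ≤ p a) (hp1 : ∑ a, p a = 1)
    (δ : ℝ) (hδ : 0 < δ)
    (c : ℝ) (hc : c = ∑ a, if 0 < p a then |Real.logb 2 (p a)| else 0)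
    (n : ℕ) (hn : 1 ≤ n) :
    ((Finset.univ.filter fun x : Fin n → 𝒳 => IsTypical p δ x).card : ℝ)
      ≤ (2 : ℝ) ^ ((n : ℝ) * (shannonEnt p + c * δ)) := by
  obtain rfl : c = sumAbsLogb p := hc
  simpa only [hp1, one_pow, one_mul] using
    typical_set_cardinality_bound_general hp0 δ (Nat.one_le_iff_ne_zero.mp hn)
end

section
/- Let 𝒳 be a finite set, p a pmf on 𝒳, and {ρ_x}_{x∈𝒳} a family of density matrices on ℂ^D; write ρ = Σ_{x∈𝒳} p(x)ρ_x and, for x^n ∈ 𝒳^n, ρ_{x^n} = ρ_{x_1} ⊗ ⋯ ⊗ ρ_{x_n}. Fix δ > 0 and reals 0 < d < D₀. Suppose that for every α > 0 and all sufficiently large n there exist an orthogonal projection Π and orthogonal projections Π_{x^n} for each x^n ∈ T_δ^{(n)}(p), all acting on the n-fold tensor power of ℂ^D, satisfying: Tr(Π ρ_{x^n}) ≥ 1 − α, Tr(Π_{x^n} ρ_{x^n}) ≥ 1 − α, Tr(Π_{x^n}) ≤ 2^{nd}, and Π ρ^{⊗n} Π ≼ 2^{−n(D₀ − α)} Π in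 the Loewner order, for every x^n ∈ T_δ^{(n)}(p). Then for every rate R < D₀ − d and every ε > 0, for all sufficiently large n there exist codewords x^n(m) ∈ T_δ^{(n)}(p), m ∈ {1,…,⌈2^{nR}⌉}, and positive semidefinite matrices Λ_m on the n-fold tensor power of ℂ^D with Σ_m Λ_m ≼ I, such that Tr(Λ_m ρ_{x^n(m)}) ≥ 1 − ε for every m. -/
open Finset
open scoped ComplexOrder

/-- The tensor-product state `ρ_{x^n} = ρ_{x_1} ⊗ ⋯ ⊗ ρ_{x_n}`, realized as a matrix on the
`n`-fold tensor power of `ℂ^D` (indexed by `Fin n → Fin D`). -/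
def mTensor {D : ℕ} {𝒳 : Type} {n : ℕ} (ρ : 𝒳 → Matrix (Fin D) (Fin D) ℂ)
    (x : Fin n → 𝒳) : Matrix (Fin n → Fin D) (Fin n → Fin D) ℂ :=
  Matrix.of fun a b => ∏ i, ρ (x i) (a i) (b i)

/-- The `n`-fold tensor power `σ^{⊗n}` of a matrix on `ℂ^D`. -/
def tPow {D : ℕ} (σ : Matrix (Fin D) (Fin D) ℂ) (n : ℕ) :
    Matrix (Fin n → Fin D) (Fin n → Fin D) ℂ :=
  Matrix.of fun a b => ∏ i, σ (a i) (b i)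

/-- An orthogonal projection: a Hermitian idempotent matrix. -/
def IsProjection {m : Type} [Fintype m] (P : Matrix m m ℂ) : Prop :=
  P.IsHermitian ∧ P * P = P

/-- The Loewner order `A ≼ B` on complex matrices: `B − A` is positive semidefinite. -/
def Loewner {m : Type} [Fintype m] (A B : Matrix m m ℂ) : Prop :=
  (B - A).PosSemidef

/-!
The code is built greedily. Let `S` be the sum of the decoding operators chosen so far. If a
codeword `x` satisfies `Tr (S ρ_x) ≤ t²`, it can be added with decoding operator
`(1 - S) Π_x (1 - S)`: the family stays a sub-POVM because `(1 - S)² ≤ 1 - S`, and the success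
probability drops by only `O(t)` below `Tr (Π_x ρ_x)`. Such a typical `x` exists as long as the
code is small: pinching with the code projector `Π` bounds `Tr (S ρ_x)` by
`2 Tr (Π S Π ρ_x) + 2α`, and the average of `Tr (Π S Π ρ_x)` over `x` is
`Tr (S Π ρ̄^{⊗n} Π) ≤ 2^{-n(D₀ - α)} Tr S ≤ 2^{-n(D₀ - α)} ⋅ 2^{nR} ⋅ 2^{nd}`, which tends to `0`
for `α < D₀ - d - R`, whereas typical sequences have total weight tending to `1` by Chebyshev's
inequality.
-/

open Filter Topology MeasureTheory ProbabilityTheory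
open scoped MatrixOrder

section OperatorInequalities

variable {A : Type*} [Ring A] [StarRing A] [PartialOrder A] [StarOrderedRing A] {s p : A}

lemma mul_self_le_self_of_le_one (hs : 0 ≤ s) (hs1 : s ≤ 1) : s * s ≤ s := by
  have hsum : s - s * s = s * (1 - s) * s + (1 - s) * s * (1 - s) := by noncomm_ring
  rw [← sub_nonneg, hsum]
  exact add_nonneg (conjugate_nonneg_of_nonneg (sub_nonneg.2 hs1) hs)
    (conjugate_nonneg_of_nonneg hs (sub_nonneg.2 hs1))

lemma conjugate_le_mul_self (hs : 0 ≤ s) (hp1 : p ≤ 1) : s * p * s ≤ s * s := by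
  simpa using conjugate_le_conjugate_of_nonneg hp1 hs

-- Adding the reflected conjugate `(p - q) * s * (p - q) ≥ 0`, `q = 1 - p`, to `s` cancels its
-- off-diagonal blocks.
lemma le_two_nsmul_conjugate_add_one_sub (hp : IsStarProjection p) (hs : 0 ≤ s) (hs1 : s ≤ 1) :
    s ≤ 2 • (p * s * p + (1 - p)) := by
  set q := 1 - p with hq
  have hqq : q * s * q ≤ q := by
    simpa [hp.one_sub.isIdempotentElem.eq] using
      conjugate_le_conjugate_of_nonneg hs1 hp.one_sub_nonneg
  have hreflect : 0 ≤ (p - q) * s * (p - q) :=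
    (hp.isSelfAdjoint.sub hp.one_sub.isSelfAdjoint).conjugate_nonneg hs
  have hexpand : 2 • (p * s * p + q * s * q) - s = (p - q) * s * (p - q) := by
    rw [hq]; noncomm_ring
  calc s ≤ 2 • (p * s * p + q * s * q) := by rwa [← sub_nonneg, hexpand]
    _ ≤ 2 • (p * s * p + q) := by gcongr

lemma add_conjugate_one_sub_le_one (hs : 0 ≤ s) (hs1 : s ≤ 1) (hp1 : p ≤ 1) :
    s + (1 - s) * p * (1 - s) ≤ 1 := by
  have hle : (1 - s) * p * (1 - s) ≤ 1 - s :=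
    (conjugate_le_mul_self (sub_nonneg.2 hs1) hp1).trans <|
      mul_self_le_self_of_le_one (sub_nonneg.2 hs1) (sub_le_self 1 hs)
  simpa using add_le_add_right hle s

lemma smul_sub_inv_smul_le_conjugate_one_sub [Algebra ℝ A] [StarModule ℝ A]
    (hp : IsStarProjection p) (hs : 0 ≤ s) (hs1 : s ≤ 1) {t : ℝ} (ht : 0 < t) :
    (1 - t) • p - t⁻¹ • s ≤ (1 - s) * p * (1 - s) := by
  have hsps : s * p * s ≤ s :=
    (conjugate_le_mul_self hs hp.le_one).trans (mul_self_le_self_of_le_one hs hs1)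
  have hsq : 0 ≤ (t • 1 - s) * p * (t • 1 - s) :=
    (((IsSelfAdjoint.all t).smul (.one A)).sub hs.isSelfAdjoint).conjugate_nonneg hp.nonneg
  -- The cross terms `-(s * p + p * s)` are absorbed by completing the square.
  have hsplit : (1 - s) * p * (1 - s) - ((1 - t) • p - t⁻¹ • s) =
      t⁻¹ • ((t • 1 - s) * p * (t • 1 - s)) + s * p * s + t⁻¹ • (s - s * p * s) := by
    simp only [sub_mul, mul_sub, smul_mul_assoc, mul_smul_comm, one_mul, mul_one, smul_sub,
      sub_smul, one_smul, inv_smul_smul₀ ht.ne']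
    abel
  rw [← sub_nonneg, hsplit]
  have := conjugate_nonneg_of_nonneg hp.nonneg hs
  have := sub_nonneg.2 hsps
  positivity

end OperatorInequalities

section Expectation

variable {m : Type*} [Fintype m] {σ S : Matrix m m ℂ}

/-- The expectation value `Re Tr (A σ)` of an operator `A` in the (possibly unnormalized) state
`σ`, as a real-linear functional of `A`. -/
noncomputable def expectation (σ : Matrix m m ℂ) : Matrix m m ℂ →ₗ[ℝ] ℝ :=
  Complex.reLm ∘ₗ Matrix.traceLinearMap m ℝ ℂ ∘ₗ LinearMap.mulRight ℝ σ

lemma expectation_apply (σ S : Matrix m m ℂ) : expectation σ S = (S * σ).trace.re := rfl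

lemma expectation_comm (σ S : Matrix m m ℂ) : expectation σ S = expectation S σ := by
  rw [expectation_apply, expectation_apply, Matrix.trace_mul_comm]

lemma expectation_conjugate (σ S P : Matrix m m ℂ) :
    expectation σ (P * S * P) = expectation (P * σ * P) S := by
  rw [expectation_apply, expectation_apply, mul_assoc, mul_assoc, Matrix.trace_mul_comm,
    mul_assoc, mul_assoc]

lemma expectation_one [DecidableEq m] (σ : Matrix m m ℂ) : expectation σ 1 = σ.trace.re := by
  rw [expectation_apply, one_mul]

lemma expectation_nonneg (hσ : 0 ≤ σ) (hS : 0 ≤ S) : 0 ≤ expectation σ S := by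
  classical
  obtain ⟨B, rfl⟩ := CStarAlgebra.nonneg_iff_eq_star_mul_self.1 hσ
  rw [expectation_apply, ← mul_assoc, Matrix.trace_mul_comm, ← mul_assoc]
  have hBSB := Matrix.nonneg_iff_posSemidef.1 (star_right_conjugate_nonneg hS B)
  exact (Complex.nonneg_iff.1 hBSB.trace_nonneg).1

lemma expectation_mono (hσ : 0 ≤ σ) : Monotone (expectation σ) := fun S T hST => by
  simpa using expectation_nonneg hσ (sub_nonneg.2 hST)

lemma sum_mul_expectation_conjugate_le {ι : Type*} [Fintype ι] {q : ι → ℝ} {σ : ι → Matrix m m ℂ}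
    {P S : Matrix m m ℂ} {c : ℝ} (hP : IsStarProjection P) (hc : 0 ≤ c)
    (hle : P * (∑ x, q x • σ x) * P ≤ c • P) (hS : 0 ≤ S) :
    ∑ x, q x * expectation (σ x) (P * S * P) ≤ c * S.trace.re := by
  classical
  calc ∑ x, q x * expectation (σ x) (P * S * P)
      = expectation (P * S * P) (∑ x, q x • σ x) := by
        simp only [map_sum, map_smul, smul_eq_mul, fun x => expectation_comm (P * S * P) (σ x)]
    _ = expectation S (P * (∑ x, q x • σ x) * P) := (expectation_conjugate _ _ _).symm
    _ ≤ expectation S (c • P) := expectation_mono hS hle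
    _ = c * expectation S P := by rw [map_smul, smul_eq_mul]
    _ ≤ c * expectation S 1 := by gcongr; exact expectation_mono hS hP.le_one
    _ = c * S.trace.re := by rw [expectation_one]

end Expectation

section Decoder

variable {m : Type*} [Fintype m] [DecidableEq m] {σ S Q : Matrix m m ℂ}

lemma trace_conjugate_one_sub_le (hS : 0 ≤ S) (hS1 : S ≤ 1) (hQ : 0 ≤ Q) :
    ((1 - S) * Q * (1 - S)).trace.re ≤ Q.trace.re := by
  have hsq : (1 - S) * 1 * (1 - S) ≤ 1 := by
    rw [mul_one]
    exact (mul_self_le_self_of_le_one (sub_nonneg.2 hS1) (sub_le_self 1 hS)).trans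
      (sub_le_self 1 hS)
  rw [← expectation_one, expectation_comm, expectation_conjugate, expectation_comm,
    ← expectation_one Q]
  exact expectation_mono hQ hsq

lemma one_sub_le_expectation_conjugate_one_sub (hσ : 0 ≤ σ) (hσ1 : σ.trace = 1) (hS : 0 ≤ S)
    (hS1 : S ≤ 1) (hQ : IsStarProjection Q) {α t : ℝ} (ht : 0 < t)
    (hσS : expectation σ S ≤ t ^ 2) (hσQ : 1 - α ≤ expectation σ Q) :
    1 - (α + 2 * t) ≤ expectation σ ((1 - S) * Q * (1 - S)) := by
  have hQ1 : expectation σ Q ≤ 1 := by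
    simpa [expectation_one, hσ1] using expectation_mono hσ hQ.le_one
  have hS_div : t⁻¹ * expectation σ S ≤ t := by
    rwa [inv_mul_le_iff₀ ht, ← sq]
  calc 1 - (α + 2 * t) ≤ (1 - t) * expectation σ Q - t⁻¹ * expectation σ S := by
        linarith [mul_le_of_le_one_right ht.le hQ1]
    _ = expectation σ ((1 - t) • Q - t⁻¹ • S) := by simp only [map_sub, map_smul, smul_eq_mul]
    _ ≤ expectation σ ((1 - S) * Q * (1 - S)) :=
      expectation_mono hσ (smul_sub_inv_smul_le_conjugate_one_sub hQ hS hS1 ht)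

end Decoder

section Packing

variable {ι m : Type*} [Fintype m] [DecidableEq m] {σ : ι → Matrix m m ℂ} {T : Finset ι}

/-- A code for the states `σ` with codewords in `T`: the decoding operators `Λ` form a sub-POVM
that identifies each codeword with probability at least `1 - ε`. The bound `E` on the traces of
the decoding operators is what allows the code to be extended by further codewords. -/
structure IsCode (σ : ι → Matrix m m ℂ) (T : Finset ι) (ε E : ℝ) {k : ℕ} (cw : Fin k → ι)
    (Λ : Fin k → Matrix m m ℂ) : Prop where
  mem : ∀ i, cw i ∈ T
  nonneg : ∀ i, 0 ≤ Λ i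
  sum_le_one : ∑ i, Λ i ≤ 1
  trace_le : ∀ i, (Λ i).trace.re ≤ E
  one_sub_le : ∀ i, 1 - ε ≤ expectation (σ (cw i)) (Λ i)

namespace IsCode

variable {α t ε E : ℝ} {k : ℕ} {cw : Fin k → ι} {Λ : Fin k → Matrix m m ℂ}

lemma sum_nonneg (h : IsCode σ T ε E cw Λ) : 0 ≤ ∑ i, Λ i :=
  Finset.sum_nonneg fun i _ => h.nonneg i

lemma trace_sum_le (h : IsCode σ T ε E cw Λ) : (∑ i, Λ i).trace.re ≤ k * E := by
  simpa [Matrix.trace_sum] using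
    Finset.sum_le_card_nsmul Finset.univ _ _ fun i _ => h.trace_le i

lemma cons (h : IsCode σ T (α + 2 * t) E cw Λ) {x : ι} (hx : x ∈ T) (hσ : 0 ≤ σ x)
    (hσ1 : (σ x).trace = 1) {Q : Matrix m m ℂ} (hQ : IsStarProjection Q) (hQE : Q.trace.re ≤ E)
    (hσQ : 1 - α ≤ expectation (σ x) Q) (ht : 0 < t)
    (hσΛ : expectation (σ x) (∑ i, Λ i) ≤ t ^ 2) :
    IsCode σ T (α + 2 * t) E (Fin.cons x cw : Fin (k + 1) → ι)
      (Fin.cons ((1 - ∑ i, Λ i) * Q * (1 - ∑ i, Λ i)) Λ : Fin (k + 1) → Matrix m m ℂ) where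
  mem := Fin.cases hx h.mem
  nonneg := Fin.cases (conjugate_nonneg_of_nonneg hQ.nonneg (sub_nonneg.2 h.sum_le_one)) h.nonneg
  sum_le_one := by
    simpa [Fin.sum_univ_succ, add_comm] using
      add_conjugate_one_sub_le_one h.sum_nonneg h.sum_le_one hQ.le_one
  trace_le := Fin.cases
    ((trace_conjugate_one_sub_le h.sum_nonneg h.sum_le_one hQ.nonneg).trans hQE) h.trace_le
  one_sub_le := Fin.cases (one_sub_le_expectation_conjugate_one_sub hσ hσ1 h.sum_nonneg
    h.sum_le_one hQ ht hσΛ hσQ) h.one_sub_le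

end IsCode

variable [Fintype ι] {q : ι → ℝ} {α c E : ℝ} {P S : Matrix m m ℂ} {Q : ι → Matrix m m ℂ}

/-- The one-shot hypotheses of the packing lemma: the code projector `P` and the codeword
projectors `Q x`, `x ∈ T`, capture their states up to `α`, the `Q x` have trace at most `E`, and
`P` compresses the `q`-average of the states below `c • P`. -/
structure PackingCondition (σ : ι → Matrix m m ℂ) (T : Finset ι) (q : ι → ℝ) (α c E : ℝ)
    (P : Matrix m m ℂ) (Q : ι → Matrix m m ℂ) : Prop where
  isStarProjection_code : IsStarProjection P
  conjugate_le : P * (∑ x, q x • σ x) * P ≤ c • P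
  one_sub_le_code : ∀ x ∈ T, 1 - α ≤ expectation (σ x) P
  isStarProjection : ∀ x ∈ T, IsStarProjection (Q x)
  one_sub_le : ∀ x ∈ T, 1 - α ≤ expectation (σ x) (Q x)
  trace_le : ∀ x ∈ T, (Q x).trace.re ≤ E

namespace PackingCondition

lemma exists_mem_expectation_lt (h : PackingCondition σ T q α c E P Q) (hσ : ∀ x, 0 ≤ σ x)
    (hσ1 : ∀ x, (σ x).trace = 1) (hq : ∀ x, 0 ≤ q x) (hc : 0 ≤ c) (hS : 0 ≤ S) (hS1 : S ≤ 1)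
    {η : ℝ} (hη : c * S.trace.re < (∑ x ∈ T, q x) * (η / 2 - α)) :
    ∃ x ∈ T, expectation (σ x) S < η := by
  by_contra! hlarge
  have hP := h.isStarProjection_code
  have hpinch : ∀ x ∈ T, η / 2 - α ≤ expectation (σ x) (P * S * P) := fun x hx => by
    have hle := expectation_mono (hσ x) (le_two_nsmul_conjugate_add_one_sub hP hS hS1)
    rw [map_nsmul, map_add, map_sub, expectation_one, hσ1, Complex.one_re, nsmul_eq_mul] at hle
    push_cast at hle
    linarith [hlarge x hx, h.one_sub_le_code x hx]
  refine hη.not_ge ?_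
  calc (∑ x ∈ T, q x) * (η / 2 - α) ≤ ∑ x ∈ T, q x * expectation (σ x) (P * S * P) := by
        rw [Finset.sum_mul]
        exact Finset.sum_le_sum fun x hx => mul_le_mul_of_nonneg_left (hpinch x hx) (hq x)
    _ ≤ ∑ x, q x * expectation (σ x) (P * S * P) :=
        Finset.sum_le_univ_sum_of_nonneg fun x => mul_nonneg (hq x) <|
          expectation_nonneg (hσ x) (hP.isSelfAdjoint.conjugate_nonneg hS)
    _ ≤ c * S.trace.re := sum_mul_expectation_conjugate_le hP hc h.conjugate_le hS

theorem exists_isCode (h : PackingCondition σ T q α c E P Q) (hσ : ∀ x, 0 ≤ σ x)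
    (hσ1 : ∀ x, (σ x).trace = 1) (hq : ∀ x, 0 ≤ q x) (hc : 0 ≤ c) {t : ℝ} (ht : 0 < t) {k : ℕ}
    (hk : ∀ j < k, c * (j * E) < (∑ x ∈ T, q x) * (t ^ 2 / 2 - α)) :
    ∃ (cw : Fin k → ι) (Λ : Fin k → Matrix m m ℂ), IsCode σ T (α + 2 * t) E cw Λ := by
  induction k with
  | zero => exact ⟨Fin.elim0, Fin.elim0, by constructor <;> simp⟩
  | succ k ih =>
    obtain ⟨cw, Λ, hcode⟩ := ih fun j hj => hk j (hj.trans k.lt_succ_self)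
    obtain ⟨x, hx, hlt⟩ := h.exists_mem_expectation_lt hσ hσ1 hq hc
      hcode.sum_nonneg hcode.sum_le_one
      ((mul_le_mul_of_nonneg_left hcode.trace_sum_le hc).trans_lt (hk k k.lt_succ_self))
    exact ⟨_, _, hcode.cons hx (hσ x) (hσ1 x) (h.isStarProjection x hx) (h.trace_le x hx)
      (h.one_sub_le x hx) ht hlt.le⟩

end PackingCondition

end Packing

section TensorProduct

variable {D n : ℕ} {𝒳 : Type}

lemma conjTranspose_mTensor (ρ : 𝒳 → Matrix (Fin D) (Fin D) ℂ) (x : Fin n → 𝒳) :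
    (mTensor ρ x).conjTranspose = mTensor (fun a => (ρ a).conjTranspose) x := by
  ext a b
  simp [mTensor]

lemma mTensor_mul_mTensor (ρ τ : 𝒳 → Matrix (Fin D) (Fin D) ℂ) (x : Fin n → 𝒳) :
    mTensor ρ x * mTensor τ x = mTensor (fun a => ρ a * τ a) x := by
  ext a b
  simp [mTensor, Matrix.mul_apply, ← Finset.prod_mul_distrib, Fintype.prod_sum]

lemma posSemidef_mTensor {ρ : 𝒳 → Matrix (Fin D) (Fin D) ℂ} (hρ : ∀ a, (ρ a).PosSemidef)
    (x : Fin n → 𝒳) : (mTensor ρ x).PosSemidef := by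
  choose B hB using fun a => CStarAlgebra.nonneg_iff_eq_star_mul_self.1 (hρ a).nonneg
  have hfactor : mTensor ρ x = (mTensor B x).conjTranspose * mTensor B x := by
    rw [conjTranspose_mTensor, mTensor_mul_mTensor, funext hB]
    rfl
  exact hfactor ▸ Matrix.posSemidef_conjTranspose_mul_self _

lemma trace_mTensor (ρ : 𝒳 → Matrix (Fin D) (Fin D) ℂ) (x : Fin n → 𝒳) :
    (mTensor ρ x).trace = ∏ i, (ρ (x i)).trace := by
  simp [mTensor, Matrix.trace, Fintype.prod_sum]

lemma tPow_sum_smul [Fintype 𝒳] (p : 𝒳 → ℝ) (ρ : 𝒳 → Matrix (Fin D) (Fin D) ℂ) (n : ℕ) :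
    tPow (∑ a, (p a : ℂ) • ρ a) n = ∑ x : Fin n → 𝒳, (∏ i, p (x i)) • mTensor ρ x := by
  ext a b
  simp [tPow, mTensor, Matrix.sum_apply, Fintype.prod_sum, Finset.prod_mul_distrib]

end TensorProduct

section Typicality

variable {𝒳 : Type} {n : ℕ}

lemma natCast_count_eq_sum_indicator [DecidableEq 𝒳] (x : Fin n → 𝒳) (a : 𝒳) :
    (count x a : ℝ) = ∑ i, ({a} : Set 𝒳).indicator 1 (x i) := by
  simp [count, Set.indicator_apply]

variable [MeasurableSpace 𝒳] (μ : Measure 𝒳) [IsProbabilityMeasure μ]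

lemma ae_count_eq_zero [DecidableEq 𝒳] {a : 𝒳} (ha : μ.real {a} = 0) :
    ∀ᵐ x : Fin n → 𝒳 ∂Measure.pi (fun _ => μ), count x a = 0 := by
  have hμa : μ {a} = 0 := (measureReal_eq_zero_iff).1 ha
  have hμ : ∀ᵐ b ∂μ, b ≠ a := measure_eq_zero_iff_ae_notMem.1 hμa
  have hne (i : Fin n) : ∀ᵐ x : Fin n → 𝒳 ∂Measure.pi (fun _ => μ), x i ≠ a :=
    (measurePreserving_eval (fun _ : Fin n => μ) i).quasiMeasurePreserving.ae hμ
  filter_upwards [ae_all_iff.2 hne] with x hx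
  simp [count, hx]

variable [MeasurableSingletonClass 𝒳]

lemma memLp_indicator_singleton (a : 𝒳) : MemLp (({a} : Set 𝒳).indicator (1 : 𝒳 → ℝ)) 2 μ :=
  memLp_indicator_const 2 (measurableSet_singleton a) 1 (.inr (measure_ne_top μ _))

lemma memLp_indicator_singleton_eval (a : 𝒳) (i : Fin n) :
    MemLp (fun x : Fin n → 𝒳 => ({a} : Set 𝒳).indicator (1 : 𝒳 → ℝ) (x i)) 2 (.pi fun _ => μ) :=
  (memLp_indicator_singleton μ a).comp_measurePreserving
    (measurePreserving_eval (fun _ : Fin n => μ) i)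

variable [DecidableEq 𝒳]

lemma memLp_natCast_count (a : 𝒳) :
    MemLp (fun x : Fin n → 𝒳 => (count x a : ℝ)) 2 (.pi fun _ => μ) := by
  simp only [natCast_count_eq_sum_indicator]
  exact memLp_finsetSum _ fun i _ => memLp_indicator_singleton_eval μ a i

lemma integral_natCast_count (a : 𝒳) :
    ∫ x : Fin n → 𝒳, (count x a : ℝ) ∂.pi (fun _ => μ) = n * μ.real {a} := by
  have heval (i : Fin n) : ∫ x : Fin n → 𝒳, ({a} : Set 𝒳).indicator (1 : 𝒳 → ℝ) (x i)
      ∂.pi (fun _ => μ) = μ.real {a} := by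
    rw [integral_comp_eval (μ := fun _ : Fin n => μ)
      (memLp_indicator_singleton μ a).aestronglyMeasurable,
      integral_indicator_one (measurableSet_singleton a)]
  simp only [natCast_count_eq_sum_indicator]
  rw [integral_finsetSum _ fun i _ =>
    (memLp_indicator_singleton_eval μ a i).integrable one_le_two]
  simp only [heval, Finset.sum_const, Finset.card_univ, Fintype.card_fin, nsmul_eq_mul]

lemma variance_natCast_count_le (a : 𝒳) :
    Var[fun x : Fin n → 𝒳 => (count x a : ℝ); .pi fun _ => μ] ≤ n / 4 := by
  have hsum : (fun x : Fin n → 𝒳 => (count x a : ℝ)) =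
      ∑ i, fun x => ({a} : Set 𝒳).indicator 1 (x i) := by
    ext x
    simp [natCast_count_eq_sum_indicator]
  have hbound : Var[({a} : Set 𝒳).indicator (1 : 𝒳 → ℝ); μ] ≤ ((1 - 0) / 2) ^ 2 :=
    variance_le_sq_of_bounded
      (.of_forall fun b => ⟨Set.indicator_nonneg (by simp) b,
        Set.indicator_le_self' (fun _ _ => zero_le_one) b⟩)
      (memLp_indicator_singleton μ a).aemeasurable
  rw [hsum, variance_sum_pi fun _ => memLp_indicator_singleton μ a]
  calc _ ≤ ∑ _ : Fin n, ((1 - 0 : ℝ) / 2) ^ 2 := Finset.sum_le_sum fun _ _ => hbound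
    _ = n / 4 := by simp; ring

lemma measureReal_count_deviation_le (a : 𝒳) (hn : n ≠ 0) {δ : ℝ} (hδ : 0 < δ) :
    (Measure.pi fun _ : Fin n => μ).real {x | δ ≤ |(count x a : ℝ) / n - μ.real {a}|} ≤
      (4 * n * δ ^ 2)⁻¹ := by
  set π := Measure.pi fun _ : Fin n => μ
  have hn : (0 : ℝ) < n := by positivity
  have hset : {x : Fin n → 𝒳 | δ ≤ |(count x a : ℝ) / n - μ.real {a}|} =
      {x | n * δ ≤ |(count x a : ℝ) - ∫ y, (count y a : ℝ) ∂π|} := by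
    ext x
    rw [Set.mem_ofPred_eq, Set.mem_ofPred_eq, integral_natCast_count,
      ← mul_div_cancel_left₀ (μ.real {a}) hn.ne', ← sub_div, abs_div, abs_of_pos hn,
      le_div_iff₀' hn, mul_div_cancel_left₀ _ hn.ne']
  calc π.real {x | δ ≤ |(count x a : ℝ) / n - μ.real {a}|}
      ≤ Var[fun x => (count x a : ℝ); π] / (n * δ) ^ 2 := by
        rw [hset]
        exact ENNReal.toReal_le_of_le_ofReal (div_nonneg (variance_nonneg _ _) (sq_nonneg _))
          (meas_ge_le_variance_div_sq (memLp_natCast_count μ a) (by positivity))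
    _ ≤ n / 4 / (n * δ) ^ 2 := by gcongr; exact variance_natCast_count_le μ a
    _ = (4 * n * δ ^ 2)⁻¹ := by field_simp

lemma one_sub_le_measureReal_isTypical [Fintype 𝒳] (hn : n ≠ 0) {δ : ℝ} (hδ : 0 < δ) :
    1 - Fintype.card 𝒳 * (4 * n * δ ^ 2)⁻¹ ≤
      (Measure.pi fun _ : Fin n => μ).real {x | IsTypical (fun a => μ.real {a}) δ x} := by
  set π := Measure.pi fun _ : Fin n => μ
  let bad (a : 𝒳) : Set (Fin n → 𝒳) := {x | ¬((0 < μ.real {a} →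
    |(count x a : ℝ) / n - μ.real {a}| ≤ δ) ∧ (μ.real {a} = 0 → count x a = 0))}
  have hbad (a : 𝒳) : π.real (bad a) ≤ (4 * n * δ ^ 2)⁻¹ := by
    rcases measureReal_nonneg.eq_or_lt' (a := μ.real {a}) with ha | ha
    · have hnull : π (bad a) = 0 := ae_iff.1 <|
        (ae_count_eq_zero μ ha).mono fun _ hx => ⟨fun h => absurd ha h.ne', fun _ => hx⟩
      rw [measureReal_def, hnull, ENNReal.toReal_zero]
      positivity
    · refine le_trans (measureReal_mono fun x hx => ?_) (measureReal_count_deviation_le μ a hn hδ)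
      by_contra hlt
      exact hx ⟨fun _ => (not_le.1 hlt).le, fun h => absurd h ha.ne'⟩
  have hcompl : {x : Fin n → 𝒳 | IsTypical (fun a => μ.real {a}) δ x}ᶜ = ⋃ a, bad a := by
    ext x
    simp [bad, IsTypical]
  have hunion : 1 - π.real {x | IsTypical (fun a => μ.real {a}) δ x} ≤
      Fintype.card 𝒳 * (4 * n * δ ^ 2)⁻¹ := by
    rw [← probReal_compl_eq_one_sub (Set.toFinite _).measurableSet, hcompl]
    calc π.real (⋃ a, bad a) ≤ ∑ a, π.real (bad a) := measureReal_iUnion_fintype_le _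
      _ ≤ ∑ _ : 𝒳, (4 * n * δ ^ 2)⁻¹ := Finset.sum_le_sum fun a _ => hbad a
      _ = Fintype.card 𝒳 * (4 * n * δ ^ 2)⁻¹ := by simp
  linarith

lemma tendsto_measureReal_isTypical [Finite 𝒳] {δ : ℝ} (hδ : 0 < δ) :
    Tendsto (fun n : ℕ => (Measure.pi fun _ : Fin n => μ).real
      {x | IsTypical (fun a => μ.real {a}) δ x}) atTop (𝓝 1) := by
  have := Fintype.ofFinite 𝒳
  have hdenom : Tendsto (fun n : ℕ => 4 * (n : ℝ) * δ ^ 2) atTop atTop :=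
    (tendsto_natCast_atTop_atTop.const_mul_atTop four_pos).atTop_mul_const (by positivity)
  have hlim := (hdenom.inv_tendsto_atTop.const_mul (Fintype.card 𝒳 : ℝ)).const_sub 1
  rw [mul_zero, sub_zero] at hlim
  refine tendsto_of_tendsto_of_tendsto_of_le_of_le' hlim tendsto_const_nhds ?_
    (.of_forall fun n => measureReal_le_one)
  filter_upwards [eventually_ne_atTop 0] with n hn
  exact one_sub_le_measureReal_isTypical μ hn hδ

end Typicality

section TypicalWeight

variable {𝒳 : Type} [Fintype 𝒳]

lemma exists_isProbabilityMeasure_real_singleton [MeasurableSpace 𝒳] [MeasurableSingletonClass 𝒳]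
    {p : 𝒳 → ℝ} (hp0 : ∀ a, 0 ≤ p a) (hp1 : ∑ a, p a = 1) :
    ∃ μ : Measure 𝒳, IsProbabilityMeasure μ ∧ ∀ a, μ.real {a} = p a := by
  have hsum : ∑ a, ENNReal.ofReal (p a) = 1 := by
    rw [← ENNReal.ofReal_sum_of_nonneg fun a _ => hp0 a, hp1, ENNReal.ofReal_one]
  refine ⟨(PMF.ofFintype _ hsum).toMeasure, inferInstance, fun a => ?_⟩
  rw [measureReal_def, PMF.toMeasure_apply_singleton _ _ (measurableSet_singleton a),
    PMF.ofFintype_apply, ENNReal.toReal_ofReal (hp0 a)]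

open Classical in
lemma tendsto_sum_prod_isTypical [DecidableEq 𝒳] {p : 𝒳 → ℝ} (hp0 : ∀ a, 0 ≤ p a)
    (hp1 : ∑ a, p a = 1) {δ : ℝ} (hδ : 0 < δ) :
    Tendsto (fun n : ℕ => ∑ x : Fin n → 𝒳 with IsTypical p δ x, ∏ i, p (x i)) atTop (𝓝 1) := by
  let _ : MeasurableSpace 𝒳 := ⊤
  obtain ⟨μ, _, hμ⟩ := exists_isProbabilityMeasure_real_singleton hp0 hp1
  obtain rfl : (fun a => μ.real {a}) = p := funext hμ
  refine (tendsto_measureReal_isTypical μ hδ).congr fun n => ?_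
  rw [← Finset.coe_filter_univ, ← sum_measureReal_singleton]
  refine Finset.sum_congr rfl fun x _ => ?_
  rw [measureReal_def, Measure.pi_singleton, ENNReal.toReal_prod]
  rfl

end TypicalWeight

lemma eventually_forall_lt_ceil_mul_lt {R d γ κ : ℝ} (hγ : R + d < γ) (hκ : 0 < κ) :
    ∀ᶠ n : ℕ in atTop, ∀ j < ⌈(2 : ℝ) ^ (n * R)⌉₊,
      (2 : ℝ) ^ (-(n : ℝ) * γ) * (j * 2 ^ (n * d)) < κ := by
  have hbase : (2 : ℝ) ^ (R + d - γ) < 1 :=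
    Real.rpow_lt_one_of_one_lt_of_neg one_lt_two (by linarith)
  filter_upwards [(tendsto_pow_atTop_nhds_zero_of_lt_one (by positivity) hbase).eventually_lt_const
    hκ] with n hn j hj
  calc (2 : ℝ) ^ (-(n : ℝ) * γ) * (j * 2 ^ (n * d))
      ≤ 2 ^ (-(n : ℝ) * γ) * (2 ^ (n * R) * 2 ^ (n * d)) := by
        gcongr
        exact (Nat.lt_ceil.1 hj).le
    _ = 2 ^ ((R + d - γ) * n) := by
        rw [← Real.rpow_add two_pos, ← Real.rpow_add two_pos]
        congr 1
        ring
    _ = (2 ^ (R + d - γ)) ^ n := Real.rpow_mul_natCast two_pos.le _ _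
    _ < κ := hn

lemma IsProjection.isStarProjection {m : Type} [Fintype m] {P : Matrix m m ℂ}
    (hP : IsProjection P) : IsStarProjection P :=
  ⟨hP.2, hP.1⟩

lemma packingCondition_mTensor {D n : ℕ} {𝒳 : Type} [Fintype 𝒳] {p : 𝒳 → ℝ}
    {ρ : 𝒳 → Matrix (Fin D) (Fin D) ℂ} {T : Finset (Fin n → 𝒳)} {α c E : ℝ}
    {P : Matrix (Fin n → Fin D) (Fin n → Fin D) ℂ}
    {Q : (Fin n → 𝒳) → Matrix (Fin n → Fin D) (Fin n → Fin D) ℂ} (hP : IsProjection P)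
    (hQ : ∀ x ∈ T, IsProjection (Q x) ∧ 1 - α ≤ (P * mTensor ρ x).trace.re ∧
      1 - α ≤ (Q x * mTensor ρ x).trace.re ∧ (Q x).trace.re ≤ E)
    (hle : Loewner (P * tPow (∑ a, (p a : ℂ) • ρ a) n * P) ((c : ℂ) • P)) :
    PackingCondition (mTensor ρ) T (fun x => ∏ i, p (x i)) α c E P Q where
  isStarProjection_code := hP.isStarProjection
  conjugate_le := by rwa [← tPow_sum_smul, Matrix.le_iff, ← Complex.coe_smul]
  one_sub_le_code x hx := (hQ x hx).2.1
  isStarProjection x hx := (hQ x hx).1.isStarProjection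
  one_sub_le x hx := (hQ x hx).2.2.1
  trace_le x hx := (hQ x hx).2.2.2

/-- **Quantum packing lemma (asymptotic form).** Given an ensemble `{p(x), ρ_x}` of density
matrices on `ℂ^D` with average `ρ̄ = Σ_x p(x) ρ_x`, reals `0 < d < D₀` and `δ > 0`, suppose
that for every `α > 0` and all sufficiently large `n` there are a code projector `Π` and
codeword projectors `Π_{x^n}` for `x^n ∈ T_δ^{(n)}(p)` with `Tr(Π ρ_{x^n}) ≥ 1−α`,
`Tr(Π_{x^n} ρ_{x^n}) ≥ 1−α`, `Tr(Π_{x^n}) ≤ 2^{nd}`, and `Π ρ̄^{⊗n} Π ≼ 2^{−n(D₀−α)} Π`.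
Then for every rate `R < D₀ − d` and `ε > 0`, for all sufficiently large `n` there exist
codewords `x^n(m) ∈ T_δ^{(n)}(p)`, `m ∈ {1,…,⌈2^{nR}⌉}`, and a sub-POVM `{Λ_m}` with
`Tr(Λ_m ρ_{x^n(m)}) ≥ 1 − ε` for every `m`. -/
theorem quantum_packing_lemma {D : ℕ} {𝒳 : Type} [Fintype 𝒳] [DecidableEq 𝒳]
    (p : 𝒳 → ℝ) (hp0 : ∀ a, 0 ≤ p a) (hp1 : ∑ a, p a = 1)
    (ρ : 𝒳 → Matrix (Fin D) (Fin D) ℂ)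
    (hρ : ∀ a, (ρ a).PosSemidef ∧ (ρ a).trace = 1)
    (ρbar : Matrix (Fin D) (Fin D) ℂ) (hρbar : ρbar = ∑ a, (p a : ℂ) • ρ a)
    (δ : ℝ) (hδ : 0 < δ) (d D₀ : ℝ) (hd : 0 < d) (hdD : d < D₀)
    (hproj : ∀ α > (0 : ℝ), ∃ N : ℕ, ∀ n ≥ N,
      ∃ (Pi : Matrix (Fin n → Fin D) (Fin n → Fin D) ℂ)
        (Pix : (Fin n → 𝒳) → Matrix (Fin n → Fin D) (Fin n → Fin D) ℂ),
        IsProjection Pi ∧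
        (∀ x : Fin n → 𝒳, IsTypical p δ x →
          IsProjection (Pix x) ∧
          1 - α ≤ (Matrix.trace (Pi * mTensor ρ x)).re ∧
          1 - α ≤ (Matrix.trace (Pix x * mTensor ρ x)).re ∧
          (Matrix.trace (Pix x)).re ≤ (2 : ℝ) ^ ((n : ℝ) * d)) ∧
        Loewner (Pi * tPow ρbar n * Pi)
          ((((2 : ℝ) ^ (-(n : ℝ) * (D₀ - α)) : ℝ) : ℂ) • Pi)) :
    ∀ R : ℝ, R < D₀ - d → ∀ ε > (0 : ℝ), ∃ N : ℕ, ∀ n ≥ N,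
      ∃ (cw : Fin (Nat.ceil ((2 : ℝ) ^ ((n : ℝ) * R))) → (Fin n → 𝒳))
        (Λ : Fin (Nat.ceil ((2 : ℝ) ^ ((n : ℝ) * R))) →
          Matrix (Fin n → Fin D) (Fin n → Fin D) ℂ),
        (∀ m, IsTypical p δ (cw m)) ∧
        (∀ m, (Λ m).PosSemidef) ∧
        ((1 - ∑ m, Λ m) : Matrix (Fin n → Fin D) (Fin n → Fin D) ℂ).PosSemidef ∧
        (∀ m, 1 - ε ≤ (Matrix.trace (Λ m * mTensor ρ (cw m))).re) := by
  classical
  intro R hR ε hε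
  subst hρbar
  obtain ⟨α, hα, hαlt⟩ : ∃ α > 0, α < min (ε / 3) (min ((ε / 3) ^ 2 / 4) (D₀ - d - R)) :=
    exists_between (by have := sub_pos.2 hR; positivity)
  obtain ⟨hαε, hαt, hαR⟩ := by simpa only [lt_min_iff] using hαlt
  refine eventually_atTop.1 ?_
  filter_upwards [eventually_atTop.2 (hproj α hα),
    (tendsto_sum_prod_isTypical hp0 hp1 hδ).eventually_const_lt one_half_lt_one,
    eventually_forall_lt_ceil_mul_lt (R := R) (d := d) (γ := D₀ - α)
      (κ := 1 / 2 * ((ε / 3) ^ 2 / 2 - α)) (by linarith) (by linarith)]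
    with n ⟨P, Q, hP, hQ, hle⟩ hweight hrate
  have hpack := packingCondition_mTensor (T := {x | IsTypical p δ x}) hP (by simpa using hQ) hle
  obtain ⟨cw, Λ, hcode⟩ := hpack.exists_isCode (t := ε / 3)
    (fun x => (posSemidef_mTensor (fun a => (hρ a).1) x).nonneg)
    (fun x => by simp [trace_mTensor, hρ]) (fun x => Finset.prod_nonneg fun i _ => hp0 _)
    (by positivity) (by positivity)
    fun j hj => (hrate j hj).trans_le (by gcongr; linarith)
  exact ⟨cw, Λ, fun m => by simpa using hcode.mem m,
    fun m => Matrix.nonneg_iff_posSemidef.1 (hcode.nonneg m), hcode.sum_le_one,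
    fun m => le_trans (by linarith) (hcode.one_sub_le m)⟩
end
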